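/- Let $R = \mathbb{C}[[u,v]]$ be the formal power series ring in two variables over $\mathbb{C}$, and let $I \subseteq R$ be the ideal generated by $4uv$, $2u(3v^2+u)$ (i.e. $6uv^2+2u^2$), and $2v(3u^2+v)$ (i.e. $6u^2v+2v^2$). Then the quotient $R/I$ is a finite-dimensional $\mathbb{C}$-vector space of dimension $3$. -/

import Mathlib

/-!
The ideal `I` equals `(u², uv, v²)`: since `4` and `2` are units, `uv ∈ I`, and subtracting multiples
of `uv` from the other generators leaves `u²` and `v²`. This is exactly the set of power series
whose coefficients at `1`, `u`, `v` vanish, i.e. the kernel of the surjective `ℂ`-linear map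
`lowCoeffs` to `ℂ³` reading off these coefficients. Hence the quotient is isomorphic to `ℂ³`.
-/

open MvPowerSeries in
/-- The `ℂ`-linear map sending a power series to its coefficients at `1`, `u`, `v`. -/
noncomputable def lowCoeffs : MvPowerSeries (Fin 2) ℂ →ₗ[ℂ] (Fin 3 → ℂ) :=
  LinearMap.pi ![coeff 0, coeff (Finsupp.single 0 1), coeff (Finsupp.single 1 1)]

open MvPowerSeries in
theorem mem_ker_lowCoeffs (f : MvPowerSeries (Fin 2) ℂ) :
    f ∈ LinearMap.ker lowCoeffs ↔
      constantCoeff f = 0 ∧ ∀ i, coeff (Finsupp.single i 1) f = 0 := by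
  simp [lowCoeffs, funext_iff, Fin.forall_fin_succ]

open MvPowerSeries in
/-- Leibniz rule for the linear coefficients. -/
theorem coeff_single_one_mul (i : Fin 2) (p q : MvPowerSeries (Fin 2) ℂ) :
    coeff (Finsupp.single i 1) (p * q) =
      constantCoeff p * coeff (Finsupp.single i 1) q +
        coeff (Finsupp.single i 1) p * constantCoeff q := by
  classical
  rw [coeff_mul, Finsupp.antidiagonal_single]
  simp [Finset.Nat.antidiagonal_succ]

open MvPowerSeries in
theorem lowCoeffs_surjective : Function.Surjective lowCoeffs := by
  intro c
  refine ⟨C (c 0) + C (c 1) * X 0 + C (c 2) * X 1, ?_⟩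
  funext i
  fin_cases i <;>
    simp [lowCoeffs, coeff_single_one_mul, coeff_index_single_X, coeff_C]

open MvPowerSeries in
/-- A series without constant and linear terms is split into the part divisible by `u²`, the part
of the remainder divisible by `v²`, and the `uv` term. -/
theorem exists_decomp (f : MvPowerSeries (Fin 2) ℂ) (h0 : constantCoeff f = 0)
    (h1 : ∀ i, coeff (Finsupp.single i 1) f = 0) :
    ∃ a b c : MvPowerSeries (Fin 2) ℂ, f = X 0 ^ 2 * a + X 1 ^ 2 * b + X 0 * X 1 * c := by
  classical
  let f₁ : MvPowerSeries (Fin 2) ℂ := fun n => if 2 ≤ n 0 then coeff n f else 0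
  let f₂ : MvPowerSeries (Fin 2) ℂ :=
    fun n => if n 0 < 2 ∧ 2 ≤ n 1 then coeff n f else 0
  have c₁ : ∀ n, coeff n f₁ = if 2 ≤ n 0 then coeff n f else 0 := fun n => rfl
  have c₂ : ∀ n, coeff n f₂ = if n 0 < 2 ∧ 2 ≤ n 1 then coeff n f else 0 := fun n => rfl
  obtain ⟨a, ha⟩ : X 0 ^ 2 ∣ f₁ := by
    rw [X_pow_dvd_iff]
    intro m hm
    rw [c₁, if_neg (by omega)]
  obtain ⟨b, hb⟩ : X 1 ^ 2 ∣ f₂ := by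
    rw [X_pow_dvd_iff]
    intro m hm
    rw [c₂, if_neg (by omega)]
  let e : Fin 2 →₀ ℕ := Finsupp.single 0 1 + Finsupp.single 1 1
  refine ⟨a, b, C (coeff e f), ?_⟩
  have hXY : X 0 * X 1 * C (coeff e f) = monomial e (coeff e f) := by
    rw [X_def, X_def, monomial_mul_monomial, ← monomial_zero_eq_C_apply, monomial_mul_monomial]
    simp [e]
  rw [← ha, ← hb, hXY]
  ext n
  rw [map_add, map_add, c₁, c₂, coeff_monomial]
  have hn : ∀ m : Fin 2 →₀ ℕ, n = m ↔ n 0 = m 0 ∧ n 1 = m 1 := fun m => by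
    simp [Finsupp.ext_iff, Fin.forall_fin_two]
  have he : n = e ↔ n 0 = 1 ∧ n 1 = 1 := by rw [hn]; simp [e]
  by_cases hA : 2 ≤ n 0
  · have h2 : ¬ n = e := by rw [he]; omega
    have h3 : ¬ n 0 < 2 := by omega
    simp [hA, h2, h3]
  by_cases hB : 2 ≤ n 1
  · have h2 : ¬ n = e := by rw [he]; omega
    have h3 : n 0 < 2 := by omega
    simp [hB, h2, h3]
  by_cases hE : n = e
  · simp [hA, hB, hE, e]
  -- the remaining exponents are those of `1`, `u` and `v`
  have hz : coeff n f = 0 := by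
    have : (n 0 = 0 ∧ n 1 = 0) ∨ (n 0 = 1 ∧ n 1 = 0) ∨ (n 0 = 0 ∧ n 1 = 1) := by
      rw [he] at hE; omega
    rcases this with h | h | h
    · rw [(hn 0).2 (by simpa using h)]; simpa using h0
    · rw [(hn (Finsupp.single 0 1)).2 (by simpa using h)]; exact h1 0
    · rw [(hn (Finsupp.single 1 1)).2 (by simpa using h)]; exact h1 1
  simp [hA, hB, hE, hz]

theorem stmt19
    (u v : MvPowerSeries (Fin 2) ℂ)
    (hu : u = MvPowerSeries.X 0) (hv : v = MvPowerSeries.X 1)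
    (I : Ideal (MvPowerSeries (Fin 2) ℂ))
    (hI : I = Ideal.span
      {4 * u * v, 6 * u * v ^ 2 + 2 * u ^ 2, 6 * u ^ 2 * v + 2 * v ^ 2}) :
    FiniteDimensional ℂ (MvPowerSeries (Fin 2) ℂ ⧸ I) ∧
      Module.finrank ℂ (MvPowerSeries (Fin 2) ℂ ⧸ I) = 3 := by
  have hker : I.restrictScalars ℂ = LinearMap.ker lowCoeffs := by
    ext f
    rw [Submodule.restrictScalars_mem, mem_ker_lowCoeffs]
    constructor
    · intro hf
      rw [hI] at hf
      simp only [Ideal.mem_span_insert, Ideal.mem_span_singleton'] at hf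
      obtain ⟨a, _, ⟨b, _, ⟨c, rfl⟩, rfl⟩, rfl⟩ := hf
      subst hu hv
      refine ⟨by simp, fun i => ?_⟩
      simp [coeff_single_one_mul, pow_two]
    · rintro ⟨h0, h1⟩
      obtain ⟨a, b, c, rfl⟩ := exists_decomp f h0 h1
      rw [← hu, ← hv]
      have g : ∀ x ∈ ({4 * u * v, 6 * u * v ^ 2 + 2 * u ^ 2, 6 * u ^ 2 * v + 2 * v ^ 2} :
          Set (MvPowerSeries (Fin 2) ℂ)), x ∈ I := fun x hx => hI ▸ Ideal.subset_span hx
      -- `4` is a unit of the power series ring, being a nonzero constant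
      obtain ⟨k, hk⟩ : ∃ k : MvPowerSeries (Fin 2) ℂ, 4 * k = 1 := by
        refine ⟨MvPowerSeries.C (1 / 4), ?_⟩
        rw [← map_ofNat (MvPowerSeries.C (σ := Fin 2) (R := ℂ)) 4, ← map_mul]
        norm_num
      have huv : u * v ∈ I := by
        have := I.mul_mem_left k (g (4 * u * v) (by simp))
        rwa [show k * (4 * u * v) = u * v by linear_combination u * v * hk] at this
      have huu : u ^ 2 ∈ I := by
        have := I.sub_mem (I.mul_mem_left (2 * k) (g (6 * u * v ^ 2 + 2 * u ^ 2) (by simp)))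
          (I.mul_mem_left (12 * k * v) huv)
        rwa [show 2 * k * (6 * u * v ^ 2 + 2 * u ^ 2) - 12 * k * v * (u * v) = u ^ 2 by
          linear_combination u ^ 2 * hk] at this
      have hvv : v ^ 2 ∈ I := by
        have := I.sub_mem (I.mul_mem_left (2 * k) (g (6 * u ^ 2 * v + 2 * v ^ 2) (by simp)))
          (I.mul_mem_left (12 * k * u) huv)
        rwa [show 2 * k * (6 * u ^ 2 * v + 2 * v ^ 2) - 12 * k * u * (u * v) = v ^ 2 by
          linear_combination v ^ 2 * hk] at this
      exact I.add_mem (I.add_mem (I.mul_mem_right _ huu) (I.mul_mem_right _ hvv))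
        (I.mul_mem_right _ huv)
  let E : (MvPowerSeries (Fin 2) ℂ ⧸ I) ≃ₗ[ℂ] (Fin 3 → ℂ) :=
    (Submodule.Quotient.restrictScalarsEquiv ℂ I).symm ≪≫ₗ
      Submodule.quotEquivOfEq _ _ hker ≪≫ₗ
      lowCoeffs.quotKerEquivOfSurjective lowCoeffs_surjective
  exact ⟨E.symm.finiteDimensional, by rw [E.finrank_eq]; simp⟩
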